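/- Let n ≥ 3 and let f ∈ Aut(F_n). If there exist distinct indices i, j with the left multiplication L_{x_i x_j} contained in the normal closure N(f) of f in Aut(F_n), then N(f) = SAut(F_n) if det(f̄) = 1, and N(f) = Aut(F_n) if det(f̄) = −1. -/

import Mathlib

open Matrix

namespace NormalClosurePaper

/-- The automorphism group of the free group on `n` generators. -/
abbrev FrAut (n : ℕ) := MulAut (FreeGroup (Fin n))

/-- Exponent sum of the generator `x_i` in a word of the free group. -/
def expSum {n : ℕ} (i : Fin n) : FreeGroup (Fin n) →* Multiplicative ℤ :=
  FreeGroup.lift fun j => Multiplicative.ofAdd (if j = i then (1 : ℤ) else 0)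

/-- The abelianized matrix of an automorphism of the free group:
the `(i, j)` entry is the exponent sum of `x_i` in `f x_j`. -/
def mat {n : ℕ} (f : FrAut n) : Matrix (Fin n) (Fin n) ℤ :=
  Matrix.of fun i j => (expSum i (f (FreeGroup.of j))).toAdd

lemma expSum_apply {n : ℕ} (f : FrAut n) (i : Fin n) (w : FreeGroup (Fin n)) :
    (expSum i (f w)).toAdd = ∑ k, mat f i k * (expSum k w).toAdd := by
  induction w using FreeGroup.induction_on with
  | C1 => simp
  | of j =>
      have h : (expSum i (f (FreeGroup.of j))).toAdd = mat f i j := rfl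
      rw [h]
      simp [expSum, mul_ite, Finset.sum_ite_eq]
  | inv_of j ih =>
      simp only [_root_.map_inv, toAdd_inv, mul_neg, Finset.sum_neg_distrib, ih]
  | mul x y ihx ihy =>
      simp only [_root_.map_mul, toAdd_mul, mul_add, Finset.sum_add_distrib, ihx, ihy]

lemma mat_one {n : ℕ} : mat (1 : FrAut n) = 1 := by
  ext i j
  simp [mat, expSum, Matrix.one_apply, eq_comm]

lemma mat_mul {n : ℕ} (f g : FrAut n) : mat (f * g) = mat f * mat g := by
  ext i j
  rw [Matrix.mul_apply]
  show (expSum i ((f * g) (FreeGroup.of j))).toAdd = _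
  rw [show (f * g) (FreeGroup.of j) = f (g (FreeGroup.of j)) from rfl, expSum_apply]
  rfl

/-- The matrix of the induced map on the abelianization, as a monoid homomorphism. -/
def matHom (n : ℕ) : FrAut n →* Matrix (Fin n) (Fin n) ℤ where
  toFun := mat
  map_one' := mat_one
  map_mul' := mat_mul

/-- The homomorphism `Aut(F_n) → GL_n(ℤ)` induced by abelianization. -/
def ρ (n : ℕ) : FrAut n →* GL (Fin n) ℤ := (matHom n).toHomUnits

/-- The composition of `ρ` with the determinant. -/
def detρ (n : ℕ) : FrAut n →* ℤˣ := (Matrix.GeneralLinearGroup.det).comp (ρ n)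

/-- The special automorphism group `SAut(F_n)`: automorphisms whose induced matrix
has determinant `1`. -/
def SAut (n : ℕ) : Subgroup (FrAut n) := (detρ n).ker

/-- The Torelli subgroup `IA_n`, the kernel of `ρ`. -/
def IA (n : ℕ) : Subgroup (FrAut n) := (ρ n).ker

/-- The group of inner automorphisms of the free group. -/
def Inn (n : ℕ) : Subgroup (FrAut n) := (MulAut.conj (G := FreeGroup (Fin n))).range

instance Inn_normal (n : ℕ) : (Inn n).Normal := by
  constructor
  rintro - ⟨a, rfl⟩ g
  refine ⟨g a, ?_⟩
  ext y
  simp [MulAut.conj_apply, MulAut.mul_apply, _root_.map_mul, _root_.map_inv]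

/-- The outer automorphism group `Out(F_n)`. -/
abbrev OutF (n : ℕ) := FrAut n ⧸ Inn n

/-- The projection `Aut(F_n) → Out(F_n)`. -/
def toOut (n : ℕ) : FrAut n →* OutF n := QuotientGroup.mk' (Inn n)

lemma mat_conj {n : ℕ} (g : FreeGroup (Fin n)) : mat (MulAut.conj g) = 1 := by
  rw [← mat_one (n := n)]
  ext i j
  simp only [mat, Matrix.of_apply, MulAut.conj_apply, MulAut.one_apply, _root_.map_mul,
    _root_.map_inv, toAdd_mul, toAdd_inv]
  omega

lemma ρ_conj {n : ℕ} (g : FreeGroup (Fin n)) : ρ n (MulAut.conj g) = 1 :=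
  Units.ext (mat_conj g)

/-- The homomorphism `Out(F_n) → GL_n(ℤ)` induced by abelianization. -/
def ρOut (n : ℕ) : OutF n →* GL (Fin n) ℤ :=
  QuotientGroup.lift (Inn n) (ρ n) (by rintro - ⟨g, rfl⟩; exact ρ_conj g)

/-- The composition of `ρOut` with the determinant. -/
def detρOut (n : ℕ) : OutF n →* ℤˣ := (Matrix.GeneralLinearGroup.det).comp (ρOut n)

/-- The special outer automorphism group `SOut(F_n)`. -/
def SOut (n : ℕ) : Subgroup (OutF n) := (detρOut n).ker

/-- Entrywise reduction `GL_n(ℤ) → GL_n(ℤ/ℓℤ)`. -/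
def redGL (n ℓ : ℕ) : GL (Fin n) ℤ →* GL (Fin n) (ZMod ℓ) :=
  Units.map (RingHom.mapMatrix (Int.castRingHom (ZMod ℓ))).toMonoidHom

/-- The subgroup `GΓ_n(ℓ)` of `GL_n(ℤ)` of matrices congruent to the identity mod `ℓ`. -/
def GGamma (n ℓ : ℕ) : Subgroup (GL (Fin n) ℤ) := (redGL n ℓ).ker

/-- The level `ℓ` congruence subgroup `Γ_n(ℓ)` (viewed inside `GL_n(ℤ)`): matrices with
determinant `1` that are congruent to the identity mod `ℓ`. -/
def GammaGL (n ℓ : ℕ) : Subgroup (GL (Fin n) ℤ) :=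
  GGamma n ℓ ⊓ (Matrix.GeneralLinearGroup.det).ker

/-- Reduction `SL_n(ℤ) → SL_n(ℤ/ℓℤ)`. -/
def redSL (n ℓ : ℕ) : Matrix.SpecialLinearGroup (Fin n) ℤ →*
    Matrix.SpecialLinearGroup (Fin n) (ZMod ℓ) :=
  Matrix.SpecialLinearGroup.map (Int.castRingHom (ZMod ℓ))

/-- Projection `SL_n(ℤ/ℓℤ) → PSL_n(ℤ/ℓℤ)`. -/
def projPSL (n ℓ : ℕ) : Matrix.SpecialLinearGroup (Fin n) (ZMod ℓ) →*
    Matrix.ProjectiveSpecialLinearGroup (Fin n) (ZMod ℓ) :=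
  QuotientGroup.mk' _

/-!
Nielsen's reduction process shows that `Aut(F_n)` is generated by the transvections and the signed
permutations of the generators: multiply an automorphism by transvections until the images of the
generators have minimal total weight, where the weight refines the word length. Then no image is
completely cancelled by its neighbours in a product, so the resulting automorphism does not shorten
words, and its inverse sends generators to letters.

Signed permutations act transitively by conjugation on the transvections, so `N(f)` contains all of
them as soon as it contains one. The transvections together with a single inversion, which has
determinant `-1` and order `2`, generate `Aut(F_n)`; hence a normal subgroup containing a
transvection contains `SAut(F_n)`, the kernel of the determinant. Thus `N(f)` is the preimage under
the determinant of the subgroup generated by `det f̄`.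
-/

open FreeGroup (invRev IsReduced)

section Letters

variable {α : Type*}

/-- The letter `a = (i, ε)` as an element of the free group: `x_i` if `ε` is `true` and `x_i⁻¹` if
`ε` is `false`. -/
def letter (a : α × Bool) : FreeGroup α := FreeGroup.mk [a]

/-- The letter inverse to `a`. -/
def letterInv (a : α × Bool) : α × Bool := (a.1, !a.2)

@[simp]
lemma letter_true (i : α) : letter (i, true) = FreeGroup.of i := rfl

@[simp]
lemma letter_false (i : α) : letter (i, false) = (FreeGroup.of i)⁻¹ := rfl

@[simp]
lemma letter_letterInv (a : α × Bool) : letter (letterInv a) = (letter a)⁻¹ := rfl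

@[simp]
lemma letterInv_letterInv (a : α × Bool) : letterInv (letterInv a) = a := by
  simp [letterInv]

lemma ne_letterInv_self (a : α × Bool) : a ≠ letterInv a := by
  simp [letterInv, Prod.ext_iff]

lemma eq_of_ne_letterInv_of_fst_eq {a b : α × Bool} (hab : b ≠ letterInv a) (h : a.1 = b.1) :
    a = b := by
  rcases a with ⟨a, ε⟩
  rcases b with ⟨b, δ⟩
  cases ε <;> cases δ <;> simp_all [letterInv]

lemma letter_ne_one (a : α × Bool) : letter a ≠ 1 := by
  rcases a with ⟨i, _ | _⟩ <;> simp

lemma mk_cons (a : α × Bool) (l : List (α × Bool)) :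
    FreeGroup.mk (a :: l) = letter a * FreeGroup.mk l := rfl

lemma apply_letter_eq_iff {G : Type*} [Group G] {φ ψ : FreeGroup α →* G} {a : α × Bool} :
    φ (letter a) = ψ (letter a) ↔ φ (FreeGroup.of a.1) = ψ (FreeGroup.of a.1) := by
  rcases a with ⟨i, _ | _⟩ <;> simp

lemma hom_ext_letter {G : Type*} [Group G] {φ ψ : FreeGroup α →* G} (a : α × Bool)
    (ha : φ (letter a) = ψ (letter a))
    (h : ∀ k, k ≠ a.1 → φ (FreeGroup.of k) = ψ (FreeGroup.of k)) : φ = ψ := by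
  refine FreeGroup.ext_hom φ ψ fun k => ?_
  rcases eq_or_ne k a.1 with rfl | hk
  · exact apply_letter_eq_iff.1 ha
  · exact h k hk

lemma mulAut_ext {f g : MulAut (FreeGroup α)}
    (h : ∀ k, f (FreeGroup.of k) = g (FreeGroup.of k)) : f = g :=
  MulEquiv.toMonoidHom_injective (FreeGroup.ext_hom _ _ h)

lemma exists_eq_letter_of_norm_eq_one [DecidableEq α] {w : FreeGroup α} (hw : w.norm = 1) :
    ∃ a, w = letter a := by
  obtain ⟨a, ha⟩ := List.length_eq_one_iff.1 hw
  exact ⟨a, by rw [← FreeGroup.mk_toWord (x := w), ha, letter]⟩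

end Letters

section CommonPrefix

variable {α : Type*} [DecidableEq α]

/-- The length of the longest common prefix of two lists. -/
def commonPrefixLength : List α → List α → ℕ
  | a :: l, b :: m => if a = b then commonPrefixLength l m + 1 else 0
  | _, _ => 0

lemma commonPrefixLength_comm (l m : List α) :
    commonPrefixLength l m = commonPrefixLength m l := by
  induction l generalizing m with
  | nil => cases m <;> rfl
  | cons a l ih =>
    cases m with
    | nil => rfl
    | cons b m => simp only [commonPrefixLength, ih m, eq_comm]

lemma commonPrefixLength_self (l : List α) : commonPrefixLength l l = l.length := by
  induction l with
  | nil => rfl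
  | cons a l ih => simp [commonPrefixLength, ih]

lemma commonPrefixLength_eq_of_lt {l m k : List α}
    (h : commonPrefixLength l m < commonPrefixLength k m) :
    commonPrefixLength l k = commonPrefixLength l m := by
  induction m generalizing l k with
  | nil => cases k <;> simp [commonPrefixLength] at h
  | cons b m ih =>
    rcases l with _ | ⟨a, l⟩ <;> rcases k with _ | ⟨c, k⟩ <;> grind [commonPrefixLength]

lemma exists_append_commonPrefixLength (l m : List α) :
    ∃ s a b, l = s ++ a ∧ m = s ++ b ∧ s.length = commonPrefixLength l m ∧
      ∀ x ∈ a.head?, ∀ y ∈ b.head?, x ≠ y := by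
  induction l generalizing m with
  | nil => exact ⟨[], [], m, by simp [commonPrefixLength]⟩
  | cons x l ih =>
    rcases m with _ | ⟨y, m⟩
    · exact ⟨[], x :: l, [], by simp [commonPrefixLength]⟩
    · rcases eq_or_ne x y with rfl | hxy
      · obtain ⟨s, a, b, rfl, rfl, hs, hab⟩ := ih m
        exact ⟨x :: s, a, b, by simp, by simp, by simp [commonPrefixLength, hs], hab⟩
      · exact ⟨[], x :: l, y :: m, by simp [commonPrefixLength, hxy]⟩

end CommonPrefix

section Cancellation

variable {α : Type*}

lemma isReduced_invRev {l : List (α × Bool)} (hl : IsReduced l) : IsReduced (invRev l) := by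
  classical
  rw [FreeGroup.isReduced_iff_reduce_eq, FreeGroup.reduce_invRev, hl.reduce_eq]

lemma isReduced_invRev_append {a b : List (α × Bool)} (ha : IsReduced a) (hb : IsReduced b)
    (hab : ∀ x ∈ a.head?, ∀ y ∈ b.head?, x ≠ y) : IsReduced (invRev a ++ b) := by
  refine List.isChain_append.2 ⟨isReduced_invRev ha, hb, ?_⟩
  rcases a with _ | ⟨⟨i, ε⟩, a⟩
  · simp
  · rintro x hx ⟨j, δ⟩ hy
    obtain rfl : (i, !ε) = x := by simpa [invRev] using hx
    have hne : (i, ε) ≠ (j, δ) := hab _ (by simp) _ hy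
    rintro (rfl : i = j)
    cases ε <;> cases δ <;> simp_all

variable [DecidableEq α]

/-- The number of letters of `u` that cancel in the product `u⁻¹ * v`. -/
def cancellation (u v : FreeGroup α) : ℕ := commonPrefixLength u.toWord v.toWord

lemma cancellation_comm (u v : FreeGroup α) : cancellation u v = cancellation v u :=
  commonPrefixLength_comm _ _

lemma cancellation_self (u : FreeGroup α) : cancellation u u = u.norm :=
  commonPrefixLength_self _

/-- The isosceles property of the ultrametric defined by common prefixes. -/
lemma cancellation_eq_of_lt {u v w : FreeGroup α} (h : cancellation u v < cancellation w v) :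
    cancellation u w = cancellation u v :=
  commonPrefixLength_eq_of_lt h

lemma exists_toWord_inv_mul (u v : FreeGroup α) :
    ∃ s a b, u.toWord = s ++ a ∧ v.toWord = s ++ b ∧ s.length = cancellation u v ∧
      (u⁻¹ * v).toWord = invRev a ++ b := by
  obtain ⟨s, a, b, hu, hv, hs, hab⟩ := exists_append_commonPrefixLength u.toWord v.toWord
  refine ⟨s, a, b, hu, hv, hs, ?_⟩
  have ha : IsReduced a := FreeGroup.isReduced_toWord.infix ⟨s, [], by simpa using hu.symm⟩
  have hb : IsReduced b := FreeGroup.isReduced_toWord.infix ⟨s, [], by simpa using hv.symm⟩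
  rw [← (isReduced_invRev_append ha hb hab).reduce_eq, ← FreeGroup.toWord_mk,
    FreeGroup.toWord_inj, ← FreeGroup.mk_toWord (x := u), ← FreeGroup.mk_toWord (x := v), hu, hv,
    ← FreeGroup.mul_mk, ← FreeGroup.mul_mk, ← FreeGroup.mul_mk, ← FreeGroup.inv_mk]
  group

lemma norm_inv_mul_add (u v : FreeGroup α) :
    (u⁻¹ * v).norm + 2 * cancellation u v = u.norm + v.norm := by
  obtain ⟨s, a, b, hu, hv, hs, hw⟩ := exists_toWord_inv_mul u v
  simp only [FreeGroup.norm, hu, hv, hw, ← hs, List.length_append, FreeGroup.invRev_length]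
  ring

lemma norm_mul_add (u v : FreeGroup α) :
    (u * v).norm + 2 * cancellation u⁻¹ v = u.norm + v.norm := by
  simpa using norm_inv_mul_add u⁻¹ v

lemma cancellation_mul_self_add (u v : FreeGroup α) :
    cancellation (u * v) u + cancellation u⁻¹ v = u.norm := by
  have h := norm_inv_mul_add u (u * v)
  rw [inv_mul_cancel_left, cancellation_comm] at h
  have := norm_mul_add u v
  omega

lemma norm_lt_norm_mul_self {v : FreeGroup α} (hv : v ≠ 1) : v.norm < (v * v).norm := by
  open FreeGroup.reduceCyclically in
  have hword := conj_conjugator_reduceCyclically v.toWord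
  have hsq := reduce_flatten_replicate_succ (FreeGroup.isReduced_toWord (x := v)) 1
  rw [← FreeGroup.toWord_pow, sq] at hsq
  have hcore : FreeGroup.reduceCyclically v.toWord ≠ [] := by
    intro hnil
    rw [hnil, List.append_nil] at hword
    refine hv ?_
    rw [← FreeGroup.mk_toWord (x := v), ← hword, ← FreeGroup.mul_mk, ← FreeGroup.inv_mk,
      mul_inv_cancel]
  have hpos := List.length_pos_iff.2 hcore
  rw [FreeGroup.norm, FreeGroup.norm, hsq, ← congrArg List.length hword]
  simp only [List.replicate_succ, List.replicate_zero, List.flatten_cons, List.flatten_nil,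
    List.append_nil, List.length_append, FreeGroup.invRev_length]
  omega

lemma two_mul_cancellation_inv_self_lt {v : FreeGroup α} (hv : v ≠ 1) :
    2 * cancellation v⁻¹ v < v.norm := by
  have := norm_lt_norm_mul_self hv
  have := norm_mul_add v v
  omega

end Cancellation

section NielsenReduced

variable {ι α : Type*} [DecidableEq α]

/-- The family `φ x_i` is *Nielsen reduced*: in a product of three factors `(φ x_i)^{±1}` without
adjacent inverse factors, the middle one is not completely cancelled. Only this condition of
Nielsen's definition is retained, since it alone keeps `φ` from shortening words. -/
def IsNielsenReduced (φ : FreeGroup ι →* FreeGroup α) : Prop :=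
  ∀ ⦃a b c : ι × Bool⦄, b ≠ letterInv a → c ≠ letterInv b →
    cancellation (φ (letter a))⁻¹ (φ (letter b)) + cancellation (φ (letter b))⁻¹ (φ (letter c)) <
      (φ (letter b)).norm

namespace IsNielsenReduced

variable {φ : FreeGroup ι →* FreeGroup α}

lemma cancellation_lt (hφ : IsNielsenReduced φ) {a b : ι × Bool} (hab : b ≠ letterInv a) :
    cancellation (φ (letter a))⁻¹ (φ (letter b)) < (φ (letter b)).norm :=
  (Nat.le_add_right _ _).trans_lt (hφ hab (ne_letterInv_self b))

lemma cancellation_lt_cancellation_mk_cons (hφ : IsNielsenReduced φ) {a : ι × Bool}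
    {l : List (ι × Bool)} (hl : IsReduced (a :: l)) {b : ι × Bool} (hab : a ≠ letterInv b) :
    cancellation (φ (letter b))⁻¹ (φ (letter a)) <
      cancellation (φ (FreeGroup.mk (a :: l))) (φ (letter a)) := by
  induction l generalizing a b with
  | nil =>
    rw [← letter, cancellation_self]
    exact hφ.cancellation_lt hab
  | cons c l ih =>
    obtain ⟨hac, hcl⟩ := FreeGroup.isReduced_cons_cons.1 hl
    have hca : c ≠ letterInv a := by
      rintro rfl
      simp [letterInv] at hac
    have heq := cancellation_eq_of_lt (ih hcl hca)
    have hmul := cancellation_mul_self_add (φ (letter a)) (φ (FreeGroup.mk (c :: l)))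
    have hmid := hφ hab hca
    rw [mk_cons a, map_mul]
    omega

lemma length_add_cancellation_le_norm (hφ : IsNielsenReduced φ) {a : ι × Bool}
    {l : List (ι × Bool)} (hl : IsReduced (a :: l)) :
    l.length + cancellation (φ (FreeGroup.mk (a :: l))) (φ (letter a)) ≤
      (φ (FreeGroup.mk (a :: l))).norm := by
  induction l generalizing a with
  | nil => rw [← letter, cancellation_self, List.length_nil, zero_add]
  | cons c l ih =>
    obtain ⟨hac, hcl⟩ := FreeGroup.isReduced_cons_cons.1 hl
    have hca : c ≠ letterInv a := by
      rintro rfl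
      simp [letterInv] at hac
    have hlt := hφ.cancellation_lt_cancellation_mk_cons hcl hca
    have heq := cancellation_eq_of_lt hlt
    have hmul := cancellation_mul_self_add (φ (letter a)) (φ (FreeGroup.mk (c :: l)))
    have hnorm := norm_mul_add (φ (letter a)) (φ (FreeGroup.mk (c :: l)))
    have := ih hcl
    rw [mk_cons a, map_mul, List.length_cons]
    omega

theorem norm_le_norm_apply [DecidableEq ι] (hφ : IsNielsenReduced φ) (w : FreeGroup ι) :
    w.norm ≤ (φ w).norm := by
  suffices h : ∀ l, IsReduced l → l.length ≤ (φ (FreeGroup.mk l)).norm by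
    simpa only [FreeGroup.norm, FreeGroup.mk_toWord] using h w.toWord FreeGroup.isReduced_toWord
  rintro (_ | ⟨a, l⟩) hred
  · simp
  · have hpos := hφ.cancellation_lt_cancellation_mk_cons hred (ne_letterInv_self a)
    have := hφ.length_add_cancellation_le_norm hred
    rw [List.length_cons]
    omega

end IsNielsenReduced

end NielsenReduced

section Weight

variable {α : Type*}

/-- The base in which words are read as numbers. -/
noncomputable abbrev digitBase (α : Type*) : ℕ := Nat.card (α × Bool) + 2

lemma one_lt_digitBase : 1 < digitBase α := by
  unfold digitBase
  omega

variable [Finite α]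

/-- A numbering of the letters by the digits `1, …, 2 * |α|`; the digit `0` is avoided so that
longer words have larger codes. -/
noncomputable def letterDigit (a : α × Bool) : ℕ := Finite.equivFin (α × Bool) a + 1

lemma letterDigit_injective : Function.Injective (letterDigit (α := α)) := fun a b h => by
  simpa [letterDigit, Fin.val_inj] using h

lemma lt_digitBase_of_mem_map_letterDigit (l : List (α × Bool)) :
    ∀ d ∈ l.map letterDigit, d < digitBase α := by
  rw [List.forall_mem_map]
  intro a _
  have := (Finite.equivFin (α × Bool) a).isLt
  unfold letterDigit digitBase
  omega

/-- A word, read as a number whose leading digit is the last letter. Words of equal length are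
thus compared lexicographically from their ends. -/
noncomputable def wordCode (l : List (α × Bool)) : ℕ :=
  Nat.ofDigits (digitBase α) (l.map letterDigit)

lemma wordCode_append (l m : List (α × Bool)) :
    wordCode (l ++ m) = wordCode l + digitBase α ^ l.length * wordCode m := by
  simp [wordCode, Nat.ofDigits_append]

lemma wordCode_lt (l : List (α × Bool)) : wordCode l < digitBase α ^ l.length := by
  rw [← l.length_map (f := letterDigit)]
  exact Nat.ofDigits_lt_base_pow_length one_lt_digitBase (lt_digitBase_of_mem_map_letterDigit l)

lemma eq_of_wordCode_eq {l m : List (α × Bool)} (hlen : l.length = m.length)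
    (h : wordCode l = wordCode m) : l = m :=
  letterDigit_injective.list_map <| Nat.ofDigits_inj_of_len_eq one_lt_digitBase
    (by simpa using hlen) (lt_digitBase_of_mem_map_letterDigit l)
    (lt_digitBase_of_mem_map_letterDigit m) h

lemma wordCode_lt_of_length_lt {l m : List (α × Bool)} (h : l.length < m.length) :
    wordCode l < wordCode m := by
  have hm : m.map letterDigit ≠ [] := by
    rintro hm
    simp_all
  have hlast : (m.map letterDigit).getLast hm ≠ 0 := by simp [List.getLast_map, letterDigit]
  refine Nat.lt_of_mul_lt_mul_left (a := digitBase α) ?_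
  calc digitBase α * wordCode l
      < digitBase α * digitBase α ^ l.length := by
        gcongr
        exact wordCode_lt l
    _ = digitBase α ^ (l.length + 1) := (pow_succ' _ _).symm
    _ ≤ digitBase α ^ (m.map letterDigit).length := by
        rw [List.length_map]
        exact Nat.pow_le_pow_right one_lt_digitBase.le h
    _ ≤ digitBase α * wordCode m := Nat.pow_length_le_mul_ofDigits hm hlast

variable [DecidableEq α]

/-- A numerical substitute for Nielsen's well-ordering of the free group: it refines the length and
compares elements of equal length by the ends of the words of `u` and `u⁻¹`. -/
noncomputable def weight (u : FreeGroup α) : ℕ := wordCode u.toWord + wordCode (invRev u.toWord)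

@[simp]
lemma weight_inv (u : FreeGroup α) : weight u⁻¹ = weight u := by
  simp [weight, add_comm, FreeGroup.toWord_inv, FreeGroup.invRev_invRev]

lemma weight_apply_letter {ι : Type*} (φ : FreeGroup ι →* FreeGroup α) (a : ι × Bool) :
    weight (φ (letter a)) = weight (φ (FreeGroup.of a.1)) := by
  rcases a with ⟨i, _ | _⟩ <;> simp

lemma norm_le_of_weight_le {u v : FreeGroup α} (h : weight u ≤ weight v) : u.norm ≤ v.norm := by
  by_contra! hlt
  refine h.not_gt (add_lt_add (wordCode_lt_of_length_lt hlt) (wordCode_lt_of_length_lt ?_))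
  rwa [FreeGroup.invRev_length, FreeGroup.invRev_length]

lemma wordCode_le_of_weight_le {u v : FreeGroup α} {a p q : List (α × Bool)}
    (hu : u.toWord = a ++ p) (hv : v.toWord = a ++ q) (hlen : p.length = q.length)
    (hle : p.length ≤ a.length) (h : weight u ≤ weight v) : wordCode p ≤ wordCode q := by
  by_contra! hlt
  refine h.not_gt ?_
  have hq : wordCode (invRev q) < digitBase α ^ a.length := by
    refine (wordCode_lt _).trans_le (Nat.pow_le_pow_right one_lt_digitBase.le ?_)
    rwa [FreeGroup.invRev_length, ← hlen]
  have hpq : digitBase α ^ a.length * wordCode q + digitBase α ^ a.length ≤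
      digitBase α ^ a.length * wordCode p := by
    rw [← Nat.mul_succ]
    exact Nat.mul_le_mul_left _ hlt
  simp only [weight, hu, hv, FreeGroup.invRev_append, wordCode_append, FreeGroup.invRev_length,
    hlen]
  omega

/-- If exactly the first half `s` of `v` cancels in `u * v` then `u * v` arises from `u` by
replacing the terminal segment `s⁻¹` by `y`. -/
lemma wordCode_invRev_le_of_weight_le {u v : FreeGroup α} {s y : List (α × Bool)}
    (hv : v.toWord = s ++ y) (hlen : s.length = y.length) (hs : cancellation u⁻¹ v = s.length)
    (hu : 2 * s.length ≤ u.norm) (hw : weight u ≤ weight (u * v)) :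
    wordCode (invRev s) ≤ wordCode y := by
  obtain ⟨t, x, z, hx, hz, ht, hxz⟩ := exists_toWord_inv_mul u⁻¹ v
  obtain ⟨rfl, rfl⟩ := List.append_inj (hz.symm.trans hv) (ht.trans hs)
  rw [inv_inv] at hxz
  have hux : u.toWord = invRev x ++ invRev t := by
    rw [← FreeGroup.invRev_append, ← hx, FreeGroup.toWord_inv, FreeGroup.invRev_invRev]
  have hnorm : u.norm = x.length + t.length := by simp [FreeGroup.norm, hux]
  exact wordCode_le_of_weight_le hux hxz (by rwa [FreeGroup.invRev_length])
    (by simp only [FreeGroup.invRev_length]; omega) hw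

end Weight

section WeightMinimal

variable {ι α : Type*} [Finite α] [DecidableEq α]

/-- The family `φ x_i` consists of nontrivial elements whose weights cannot be decreased by an
elementary Nielsen transformation. -/
structure IsWeightMinimal (φ : FreeGroup ι →* FreeGroup α) : Prop where
  ne_one : ∀ a, φ (letter a) ≠ 1
  weight_le : ∀ a b : ι × Bool, a.1 ≠ b.1 →
    weight (φ (letter a)) ≤ weight (φ (letter a) * φ (letter b))

namespace IsWeightMinimal

variable {φ : FreeGroup ι →* FreeGroup α} {a b : ι × Bool}

lemma fst_ne_of_norm_le_two_mul_cancellation (hφ : IsWeightMinimal φ) (hab : b ≠ letterInv a)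
    (h : (φ (letter b)).norm ≤ 2 * cancellation (φ (letter a))⁻¹ (φ (letter b))) :
    a.1 ≠ b.1 := by
  intro hfst
  obtain rfl := eq_of_ne_letterInv_of_fst_eq hab hfst
  exact h.not_gt (two_mul_cancellation_inv_self_lt (hφ.ne_one a))

lemma two_mul_cancellation_le_right (hφ : IsWeightMinimal φ) (hab : b ≠ letterInv a) :
    2 * cancellation (φ (letter a))⁻¹ (φ (letter b)) ≤ (φ (letter b)).norm := by
  by_contra! hlt
  have hfst := hφ.fst_ne_of_norm_le_two_mul_cancellation hab hlt.le
  have := norm_le_of_weight_le (hφ.weight_le a b hfst)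
  have := norm_mul_add (φ (letter a)) (φ (letter b))
  omega

lemma two_mul_cancellation_le_left (hφ : IsWeightMinimal φ) (hab : b ≠ letterInv a) :
    2 * cancellation (φ (letter a))⁻¹ (φ (letter b)) ≤ (φ (letter a)).norm := by
  have h := hφ.two_mul_cancellation_le_right (a := letterInv b) (b := letterInv a)
    (by simpa using hab.symm)
  simpa [cancellation_comm] using h

lemma wordCode_invRev_le (hφ : IsWeightMinimal φ) (hab : b ≠ letterInv a)
    (hhalf : 2 * cancellation (φ (letter a))⁻¹ (φ (letter b)) = (φ (letter b)).norm)
    {s y : List (α × Bool)} (hb : (φ (letter b)).toWord = s ++ y) (hlen : s.length = y.length) :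
    wordCode (invRev s) ≤ wordCode y := by
  have hle := hφ.two_mul_cancellation_le_left hab
  have hnorm : (φ (letter b)).norm = s.length + y.length := by simp [FreeGroup.norm, hb]
  exact wordCode_invRev_le_of_weight_le hb hlen (by omega) (by omega)
    (hφ.weight_le a b (hφ.fst_ne_of_norm_le_two_mul_cancellation hab hhalf.ge))

theorem isNielsenReduced (hφ : IsWeightMinimal φ) : IsNielsenReduced φ := by
  intro a b c hab hbc
  by_contra! hle
  have hbc' : letterInv b ≠ letterInv (letterInv c) := by simpa using hbc.symm
  have hleft := hφ.two_mul_cancellation_le_right hab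
  have hright := hφ.two_mul_cancellation_le_left hbc
  obtain ⟨s, y, hb, hs⟩ : ∃ s y, (φ (letter b)).toWord = s ++ y ∧
      s.length = cancellation (φ (letter a))⁻¹ (φ (letter b)) := by
    refine ⟨_, _, (List.take_append_drop _ _).symm, List.length_take_of_le ?_⟩
    exact (Nat.le_mul_of_pos_left _ two_pos).trans hleft
  have hnorm : (φ (letter b)).norm = s.length + y.length := by simp [FreeGroup.norm, hb]
  have hinv : (φ (letter (letterInv b))).toWord = invRev y ++ invRev s := by
    rw [letter_letterInv, map_inv, FreeGroup.toWord_inv, hb, FreeGroup.invRev_append]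
  have hsy : wordCode (invRev s) ≤ wordCode y :=
    hφ.wordCode_invRev_le hab (by omega) hb (by omega)
  have hys : wordCode y ≤ wordCode (invRev s) := by
    have h := hφ.wordCode_invRev_le hbc' ?_ hinv (by simp only [FreeGroup.invRev_length]; omega)
    · rwa [FreeGroup.invRev_invRev] at h
    · simp only [letter_letterInv, map_inv, inv_inv, FreeGroup.norm_inv_eq]
      rw [cancellation_comm]
      omega
  obtain rfl : invRev s = y :=
    eq_of_wordCode_eq (by rw [FreeGroup.invRev_length]; omega) (hsy.antisymm hys)
  apply hφ.ne_one b
  rw [← FreeGroup.mk_toWord (x := φ (letter b)), hb, ← FreeGroup.mul_mk, ← FreeGroup.inv_mk,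
    mul_inv_cancel]

end IsWeightMinimal

end WeightMinimal

section Generators

variable {α : Type*} [DecidableEq α]

/-- The endomorphism sending the letter `a` to `a * b` and fixing the other generators. -/
def transvectionHom (a b : α × Bool) : FreeGroup α →* FreeGroup α :=
  FreeGroup.lift fun k => if k = a.1 then
    (if a.2 then FreeGroup.of k * letter b else (letter b)⁻¹ * FreeGroup.of k) else FreeGroup.of k

@[simp]
lemma transvectionHom_letter (a b : α × Bool) :
    transvectionHom a b (letter a) = letter a * letter b := by
  rcases a with ⟨i, _ | _⟩ <;> simp [transvectionHom]

lemma transvectionHom_letter_of_ne (a b : α × Bool) {c : α × Bool} (hc : c.1 ≠ a.1) :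
    transvectionHom a b (letter c) = letter c := by
  rcases c with ⟨i, _ | _⟩ <;> simp [transvectionHom, hc]

lemma transvectionHom_comp {a b : α × Bool} (hab : a.1 ≠ b.1) :
    (transvectionHom a (letterInv b)).comp (transvectionHom a b) = MonoidHom.id _ := by
  refine hom_ext_letter a ?_ fun k hk => ?_
  · simp [transvectionHom_letter_of_ne _ _ hab.symm]
  · simp [transvectionHom, hk]

/-- The automorphism sending the letter `a` to `a * b` and fixing the other generators. Taking
letters instead of generators for `a` and `b` covers left and right multiplications. -/
def transvection (a b : α × Bool) (hab : a.1 ≠ b.1) : MulAut (FreeGroup α) :=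
  MonoidHom.toMulEquiv (transvectionHom a b) (transvectionHom a (letterInv b))
    (transvectionHom_comp hab)
    (by simpa only [letterInv_letterInv] using transvectionHom_comp (b := letterInv b) hab)

@[simp]
lemma transvection_letter {a b : α × Bool} (hab : a.1 ≠ b.1) :
    transvection a b hab (letter a) = letter a * letter b :=
  transvectionHom_letter a b

lemma transvection_letter_of_ne {a b : α × Bool} (hab : a.1 ≠ b.1) {c : α × Bool}
    (hc : c.1 ≠ a.1) : transvection a b hab (letter c) = letter c :=
  transvectionHom_letter_of_ne a b hc

lemma transvection_of_of_ne {a b : α × Bool} (hab : a.1 ≠ b.1) {k : α} (hk : k ≠ a.1) :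
    transvection a b hab (FreeGroup.of k) = FreeGroup.of k :=
  transvection_letter_of_ne hab (c := (k, true)) hk

@[simp]
lemma transvection_true_of {i : α} {b : α × Bool} (hib : i ≠ b.1) :
    transvection (i, true) b hib (FreeGroup.of i) = FreeGroup.of i * letter b :=
  transvection_letter (a := (i, true)) hib

@[simp]
lemma transvection_false_of {i : α} {b : α × Bool} (hib : i ≠ b.1) :
    transvection (i, false) b hib (FreeGroup.of i) = (letter b)⁻¹ * FreeGroup.of i := by
  simpa using congrArg (·⁻¹) (transvection_letter (a := (i, false)) hib)

lemma eq_transvection {f : MulAut (FreeGroup α)} {a b : α × Bool} (hab : a.1 ≠ b.1)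
    (ha : f (letter a) = letter a * letter b)
    (h : ∀ k, k ≠ a.1 → f (FreeGroup.of k) = FreeGroup.of k) : f = transvection a b hab :=
  MulEquiv.toMonoidHom_injective <| hom_ext_letter a (ha.trans (transvection_letter hab).symm)
    fun k hk => (h k hk).trans (transvection_of_of_ne hab hk).symm

end Generators

section SignedPerm

variable {α : Type*}

/-- The endomorphism sending the generator `k` to the letter `(σ k, s k)`. -/
def signedPermHom (σ : Equiv.Perm α) (s : α → Bool) : FreeGroup α →* FreeGroup α :=
  FreeGroup.lift fun k => letter (σ k, s k)

@[simp]
lemma signedPermHom_letter (σ : Equiv.Perm α) (s : α → Bool) (a : α × Bool) :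
    signedPermHom σ s (letter a) = letter (σ a.1, s a.1 == a.2) := by
  rcases a with ⟨i, _ | _⟩
  · simp [signedPermHom, ← letter_letterInv, letterInv]
  · simp [signedPermHom]

@[simp]
lemma signedPermHom_of (σ : Equiv.Perm α) (s : α → Bool) (k : α) :
    signedPermHom σ s (FreeGroup.of k) = letter (σ k, s k) :=
  FreeGroup.lift_apply_of

/-- The automorphism sending the generator `k` to the letter `(σ k, s k)`. -/
def signedPerm (σ : Equiv.Perm α) (s : α → Bool) : MulAut (FreeGroup α) :=
  MonoidHom.toMulEquiv (signedPermHom σ s) (signedPermHom σ⁻¹ fun k => s (σ⁻¹ k))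
    (FreeGroup.ext_hom _ _ fun k => by simp)
    (FreeGroup.ext_hom _ _ fun k => by simp)

@[simp]
lemma signedPerm_letter (σ : Equiv.Perm α) (s : α → Bool) (a : α × Bool) :
    signedPerm σ s (letter a) = letter (σ a.1, s a.1 == a.2) :=
  signedPermHom_letter σ s a

@[simp]
lemma signedPerm_of (σ : Equiv.Perm α) (s : α → Bool) (k : α) :
    signedPerm σ s (FreeGroup.of k) = letter (σ k, s k) :=
  signedPermHom_of σ s k

lemma signedPerm_mul (σ τ : Equiv.Perm α) (s t : α → Bool) :
    signedPerm σ s * signedPerm τ t = signedPerm (σ * τ) fun k => s (τ k) == t k :=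
  mulAut_ext fun k => by simp

lemma signedPerm_one : signedPerm (1 : Equiv.Perm α) (fun _ => true) = 1 :=
  mulAut_ext fun k => by simp

lemma signedPerm_conj_transvection [DecidableEq α] (σ : Equiv.Perm α) (s : α → Bool)
    {a b : α × Bool} (hab : a.1 ≠ b.1) :
    signedPerm σ s * transvection a b hab * (signedPerm σ s)⁻¹ =
      transvection (σ a.1, s a.1 == a.2) (σ b.1, s b.1 == b.2) (σ.injective.ne hab) := by
  rw [mul_inv_eq_iff_eq_mul]
  refine MulEquiv.toMonoidHom_injective (hom_ext_letter a ?_ fun k hk => ?_)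
  · simp
  · simp [transvection_of_of_ne hab hk, transvection_letter_of_ne, σ.injective.ne hk]

lemma exists_signedPerm_apply_eq {a b c d : α × Bool} (hab : a.1 ≠ b.1) (hcd : c.1 ≠ d.1) :
    ∃ (σ : Equiv.Perm α) (s : α → Bool),
      (σ a.1, s a.1 == a.2) = c ∧ (σ b.1, s b.1 == b.2) = d := by
  classical
  obtain ⟨σ, ha, hb⟩ := MulAction.is_two_pretransitive_iff.1
    (Equiv.Perm.isMultiplyPretransitive α 2) hab hcd
  refine ⟨σ, fun k => if k = a.1 then a.2 == c.2 else b.2 == d.2, ?_, ?_⟩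
  · ext
    · exact ha
    · cases a.2 <;> cases c.2 <;> simp
  · ext
    · exact hb
    · cases b.2 <;> cases d.2 <;> simp [hab.symm]

variable [DecidableEq α]

lemma transvection_mem_of_normal (N : Subgroup (MulAut (FreeGroup α))) [N.Normal]
    {a b : α × Bool} {hab : a.1 ≠ b.1} (h : transvection a b hab ∈ N) (c d : α × Bool)
    (hcd : c.1 ≠ d.1) : transvection c d hcd ∈ N := by
  obtain ⟨σ, s, rfl, rfl⟩ := exists_signedPerm_apply_eq hab hcd
  rw [← signedPerm_conj_transvection σ s hab]
  exact Subgroup.Normal.conj_mem inferInstance _ h _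

/-- The automorphism inverting the generator `x_i` and fixing the others. -/
def inversion (i : α) : MulAut (FreeGroup α) := signedPerm 1 fun k => k ≠ i

/-- The automorphism with `x_i ↦ x_j ↦ x_i⁻¹` fixing the other generators. -/
def quarterTurn (i j : α) : MulAut (FreeGroup α) := signedPerm (Equiv.swap i j) fun k => k ≠ j

lemma inversion_mul_self (i : α) : inversion i * inversion i = 1 := by
  refine mulAut_ext fun k => ?_
  rcases eq_or_ne k i with rfl | hk <;> simp [inversion, *]

lemma quarterTurn_mul_inversion_eq_swap (i j : α) :
    quarterTurn i j * inversion j = signedPerm (Equiv.swap i j) fun _ => true := by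
  refine mulAut_ext fun k => ?_
  rcases eq_or_ne k j with rfl | hk <;> simp [inversion, quarterTurn, *]

lemma quarterTurn_mul_inversion {i j : α} (hij : i ≠ j) :
    quarterTurn i j * inversion i = inversion j * quarterTurn i j := by
  simp only [inversion, quarterTurn, signedPerm_mul, one_mul, mul_one, Equiv.Perm.one_apply]
  congr 1
  funext k
  grind

lemma quarterTurn_eq_transvection_mul {i j : α} (hij : i ≠ j) :
    quarterTurn i j =
      transvection (i, true) (j, true) hij * transvection (j, true) (i, false) hij.symm *
        transvection (i, false) (j, false) hij := by
  refine mulAut_ext fun k => ?_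
  rcases eq_or_ne k i with rfl | hki
  · simp [quarterTurn, hij, hij.symm, transvection_of_of_ne]
  rcases eq_or_ne k j with rfl | hkj
  · simp [quarterTurn, hki, transvection_of_of_ne]
  · simp [quarterTurn, Equiv.swap_apply_of_ne_of_ne hki hkj, transvection_of_of_ne, hki, hkj]

end SignedPerm

section NielsenGeneration

variable {α : Type*}

lemma letter_injective : Function.Injective (letter (α := α)) := fun a b h => by
  classical
  simpa [letter] using congrArg FreeGroup.toWord h

lemma exists_eq_signedPerm [Finite α] {f : MulAut (FreeGroup α)}
    (hf : ∀ k, ∃ a, f (FreeGroup.of k) = letter a) : ∃ σ s, f = signedPerm σ s := by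
  choose a ha using hf
  have hinj : Function.Injective fun k => (a k).1 := by
    intro k l hkl
    by_cases hinv : a k = letterInv (a l)
    · have h : f (letter (k, true)) = f (letter (l, false)) := by simp [ha, hinv]
      exact congrArg Prod.fst (letter_injective (f.injective h))
    · have h := eq_of_ne_letterInv_of_fst_eq hinv hkl.symm
      exact FreeGroup.of_injective (f.injective (by rw [ha, ha, h]))
  refine ⟨Equiv.ofBijective _ (Finite.injective_iff_bijective.1 hinj), fun k => (a k).2, ?_⟩
  exact mulAut_ext fun k => by simp [ha]

lemma exists_inv_eq_signedPerm_of_isNielsenReduced [Finite α] [DecidableEq α]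
    {f : MulAut (FreeGroup α)} (hf : IsNielsenReduced (f : FreeGroup α →* FreeGroup α)) :
    ∃ σ s, f⁻¹ = signedPerm σ s := by
  refine exists_eq_signedPerm fun k => exists_eq_letter_of_norm_eq_one ?_
  have hle : (f⁻¹ (FreeGroup.of k)).norm ≤ 1 := by
    simpa using hf.norm_le_norm_apply (f⁻¹ (FreeGroup.of k))
  have hne : (f⁻¹ (FreeGroup.of k)).norm ≠ 0 := by simp
  omega

variable {ι : Type*} [Finite α] [DecidableEq α] [DecidableEq ι]

lemma weight_le_of_sum_weight_le [Fintype ι] {φ : FreeGroup ι →* FreeGroup α} {a b : ι × Bool}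
    (hab : a.1 ≠ b.1)
    (h : ∑ k, weight (φ (FreeGroup.of k)) ≤
      ∑ k, weight (φ (transvection a b hab (FreeGroup.of k)))) :
    weight (φ (letter a)) ≤ weight (φ (letter a) * φ (letter b)) := by
  have hmul : weight (φ (letter a) * φ (letter b)) =
      weight (φ (transvection a b hab (FreeGroup.of a.1))) := by
    rw [← map_mul, ← transvection_letter hab]
    exact weight_apply_letter (φ.comp (transvection a b hab).toMonoidHom) a
  rw [weight_apply_letter, hmul]
  rw [← Finset.add_sum_erase _ _ (Finset.mem_univ a.1),
    ← Finset.add_sum_erase _ _ (Finset.mem_univ a.1)] at h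
  refine Nat.le_of_add_le_add_right (h.trans_eq (congrArg _ (Finset.sum_congr rfl ?_)))
  intro k hk
  rw [transvection_of_of_ne hab (Finset.ne_of_mem_erase hk)]

theorem exists_isNielsenReduced_comp [Finite ι] {H : Subgroup (MulAut (FreeGroup ι))}
    (hH : ∀ a b hab, transvection a b hab ∈ H) {φ : FreeGroup ι →* FreeGroup α}
    (hφ : Function.Injective φ) : ∃ h ∈ H, IsNielsenReduced (φ.comp h.toMonoidHom) := by
  cases nonempty_fintype ι
  let totalWeight (h : MulAut (FreeGroup ι)) : ℕ := ∑ k, weight (φ (h (FreeGroup.of k)))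
  obtain ⟨h, hh, hmin⟩ : ∃ h ∈ H, ∀ h' ∈ H, totalWeight h ≤ totalWeight h' :=
    ⟨_, Function.argminOn_mem totalWeight H ⟨1, H.one_mem⟩,
      fun h' => Function.argminOn_le totalWeight H⟩
  have hinj : Function.Injective (φ.comp h.toMonoidHom) := hφ.comp h.injective
  have hweight : IsWeightMinimal (φ.comp h.toMonoidHom) :=
    { ne_one := fun a => (map_ne_one_iff (φ.comp h.toMonoidHom) hinj).2 (letter_ne_one a)
      weight_le := fun a b hab =>
        weight_le_of_sum_weight_le hab (hmin _ (mul_mem hh (hH a b hab))) }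
  exact ⟨h, hh, hweight.isNielsenReduced⟩

theorem eq_top_of_transvection_mem_of_signedPerm_mem {H : Subgroup (MulAut (FreeGroup α))}
    (htrans : ∀ a b hab, transvection a b hab ∈ H) (hperm : ∀ σ s, signedPerm σ s ∈ H) :
    H = ⊤ := by
  refine (Subgroup.eq_top_iff' H).2 fun f => ?_
  obtain ⟨h, hh, hred⟩ := exists_isNielsenReduced_comp htrans (φ := f.toMonoidHom) f.injective
  obtain ⟨σ, s, hs⟩ := exists_inv_eq_signedPerm_of_isNielsenReduced (f := f * h) hred
  have hfh : f * h ∈ H := inv_mem_iff.1 (hs ▸ hperm σ s)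
  exact (H.mul_mem_cancel_right hh).1 hfh

end NielsenGeneration

section GeneratingSubgroup

variable {α : Type*} [DecidableEq α] {H : Subgroup (MulAut (FreeGroup α))}

lemma quarterTurn_mem (hH : ∀ a b hab, transvection a b hab ∈ H) {i j : α} (hij : i ≠ j) :
    quarterTurn i j ∈ H := by
  rw [quarterTurn_eq_transvection_mul hij]
  exact mul_mem (mul_mem (hH _ _ _) (hH _ _ _)) (hH _ _ _)

lemma inversion_mem_of_inversion_mem (hH : ∀ a b hab, transvection a b hab ∈ H) {i : α}
    (hi : inversion i ∈ H) (j : α) : inversion j ∈ H := by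
  rcases eq_or_ne i j with rfl | hij
  · exact hi
  · have hturn := quarterTurn_mem hH hij
    rw [← H.mul_mem_cancel_right hturn, ← quarterTurn_mul_inversion hij]
    exact mul_mem hturn hi

variable [Finite α]

lemma signedPerm_one_left_mem (hH : ∀ j, inversion j ∈ H) (s : α → Bool) : signedPerm 1 s ∈ H := by
  cases nonempty_fintype α
  suffices h : ∀ S : Finset α, signedPerm 1 (fun k => decide (k ∉ S)) ∈ H by
    simpa using h (Finset.univ.filter fun k => s k = false)
  intro S
  induction S using Finset.induction_on with
  | empty => simp [signedPerm_one]
  | insert a S ha ih =>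
    convert mul_mem ih (hH a) using 1
    refine mulAut_ext fun k => ?_
    rcases eq_or_ne k a with rfl | hk <;> simp [inversion, *]

lemma signedPerm_true_mem (hH : ∀ a b hab, transvection a b hab ∈ H)
    (hinv : ∀ j, inversion j ∈ H) (σ : Equiv.Perm α) : signedPerm σ (fun _ => true) ∈ H := by
  induction σ using Equiv.Perm.swap_induction_on with
  | one => exact signedPerm_one (α := α) ▸ H.one_mem
  | swap_mul τ j k hjk ih =>
    have h := mul_mem (mul_mem (quarterTurn_mem hH hjk) (hinv k)) ih
    rw [quarterTurn_mul_inversion_eq_swap, signedPerm_mul] at h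
    simpa using h

theorem eq_top_of_transvection_mem_of_inversion_mem (hH : ∀ a b hab, transvection a b hab ∈ H)
    {i : α} (hi : inversion i ∈ H) : H = ⊤ := by
  have hinv := inversion_mem_of_inversion_mem hH hi
  refine eq_top_of_transvection_mem_of_signedPerm_mem hH fun σ s => ?_
  have h := mul_mem (signedPerm_true_mem hH hinv σ) (signedPerm_one_left_mem hinv s)
  rw [signedPerm_mul] at h
  simpa using h

end GeneratingSubgroup

section Groups

variable {G A : Type*} [Group G]

lemma ker_le_of_sup_zpowers_eq_top [Group A] {φ : G →* A} {N : Subgroup G} [N.Normal] {t : G}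
    (hN : N ≤ φ.ker) (htop : N ⊔ Subgroup.zpowers t = ⊤) (ht : orderOf t ∣ orderOf (φ t)) :
    φ.ker ≤ N := by
  intro g hg
  obtain ⟨m, hm, -, ⟨k, rfl⟩, rfl⟩ :=
    Subgroup.mem_sup_of_normal_left.1 (htop ▸ Subgroup.mem_top g)
  have hk : φ t ^ k = 1 := by simpa using (φ.ker.mul_mem_cancel_left (hN hm)).1 hg
  have : t ^ k = 1 := orderOf_dvd_iff_zpow_eq_one.1
    ((Int.natCast_dvd_natCast.2 ht).trans (orderOf_dvd_iff_zpow_eq_one.2 hk))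
  simpa [this] using hm

lemma normalClosure_singleton_eq_comap_zpowers [CommGroup A] {φ : G →* A} {f : G}
    (h : φ.ker ≤ Subgroup.normalClosure {f}) :
    Subgroup.normalClosure {f} = (Subgroup.zpowers (φ f)).comap φ := by
  refine le_antisymm (Subgroup.normalClosure_le_normal ?_) ?_
  · simp
  · rintro g ⟨k, hk⟩
    have hf : f ^ k ∈ Subgroup.normalClosure {f} :=
      Subgroup.zpow_mem _ (Subgroup.subset_normalClosure (Set.mem_singleton f)) k
    rw [← Subgroup.mul_mem_cancel_right _ (inv_mem hf)]
    refine h ?_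
    simp_all [MonoidHom.mem_ker]

end Groups

section Determinant

variable {n : ℕ}

lemma coe_detρ (f : FrAut n) : ((detρ n f : ℤˣ) : ℤ) = (mat f).det := rfl

lemma detρ_inversion (i : Fin n) : detρ n (inversion i) = -1 := by
  have hmat : mat (inversion i) = Matrix.diagonal fun k => if k = i then -1 else 1 := by
    ext k l
    rcases eq_or_ne l i with rfl | hl
    · have himage : inversion l (FreeGroup.of l) = (FreeGroup.of l)⁻¹ := by simp [inversion]
      simp only [mat, expSum, Matrix.of_apply, himage, map_inv, FreeGroup.lift_apply_of, toAdd_inv,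
        toAdd_ofAdd, Matrix.diagonal_apply]
      grind
    · have himage : inversion i (FreeGroup.of l) = FreeGroup.of l := by simp [inversion, hl]
      simp only [mat, expSum, Matrix.of_apply, himage, FreeGroup.lift_apply_of, toAdd_ofAdd,
        Matrix.diagonal_apply]
      grind
  apply Units.ext
  simp [coe_detρ, hmat, Matrix.det_diagonal]

lemma transvection_mem_SAut (a b : Fin n × Bool) (hab : a.1 ≠ b.1) :
    transvection a b hab ∈ SAut n := by
  have : (SAut n).Normal := MonoidHom.normal_ker _
  suffices h : transvection (a.1, true) (b.1, true) hab ∈ SAut n from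
    transvection_mem_of_normal _ h a b hab
  have hmat : mat (transvection (a.1, true) (b.1, true) hab) = Matrix.transvection b.1 a.1 1 := by
    ext k l
    simp only [mat, expSum, Matrix.of_apply, Matrix.transvection, Matrix.add_apply,
      Matrix.one_apply, Matrix.single_apply]
    rcases eq_or_ne l a.1 with rfl | hl
    · simp only [transvection_true_of, letter_true, map_mul, FreeGroup.lift_apply_of, toAdd_mul,
        toAdd_ofAdd]
      grind
    · simp only [transvection_of_of_ne (a := (a.1, true)) (b := (b.1, true)) hab hl,
        FreeGroup.lift_apply_of, toAdd_ofAdd]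
      grind
  apply Units.ext
  rw [coe_detρ, hmat, Matrix.det_transvection_of_ne _ _ hab.symm, Units.val_one]

lemma SAut_le_of_transvection_mem {N : Subgroup (FrAut n)} [N.Normal] {a b : Fin n × Bool}
    {hab : a.1 ≠ b.1} (h : transvection a b hab ∈ N) : SAut n ≤ N := by
  have : (SAut n).Normal := MonoidHom.normal_ker _
  have htop : (N ⊓ SAut n) ⊔ Subgroup.zpowers (inversion a.1) = ⊤ :=
    eq_top_of_transvection_mem_of_inversion_mem
      (fun c d hcd => Subgroup.mem_sup_left
        ⟨transvection_mem_of_normal N h c d hcd, transvection_mem_SAut c d hcd⟩)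
      (Subgroup.mem_sup_right (Subgroup.mem_zpowers _))
  have horder : orderOf (inversion a.1) ∣ orderOf (detρ n (inversion a.1)) := by
    rw [detρ_inversion, orderOf_eq_prime (p := 2) (x := (-1 : ℤˣ)) (by simp) (by decide)]
    exact orderOf_dvd_of_pow_eq_one (by rw [sq, inversion_mul_self])
  exact (ker_le_of_sup_zpowers_eq_top inf_le_right htop horder).trans inf_le_left

end Determinant

theorem normalClosure_of_left_multiplication_aut_general (n : ℕ) (f : FrAut n)
    (h : ∃ i j : Fin n, i ≠ j ∧ ∃ L : FrAut n,
      L (FreeGroup.of i) = FreeGroup.of j * FreeGroup.of i ∧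
      (∀ k, k ≠ i → L (FreeGroup.of k) = FreeGroup.of k) ∧
      L ∈ Subgroup.normalClosure {f}) :
    (detρ n f = 1 → Subgroup.normalClosure {f} = SAut n) ∧
    (detρ n f = -1 → Subgroup.normalClosure {f} = ⊤) := by
  obtain ⟨i, j, hij, L, hi, hk, hL⟩ := h
  have hLtrans : L = transvection (i, false) (j, false) hij :=
    eq_transvection hij (by simp [hi]) hk
  have hN : Subgroup.normalClosure {f} = (Subgroup.zpowers (detρ n f)).comap (detρ n) :=
    normalClosure_singleton_eq_comap_zpowers (SAut_le_of_transvection_mem (hLtrans ▸ hL))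
  constructor <;> intro hdet <;> rw [hN, hdet]
  · rw [Subgroup.zpowers_one_eq_bot, MonoidHom.comap_bot, SAut]
  · refine (Subgroup.eq_top_iff' _).2 fun g => ?_
    rcases Int.units_eq_one_or (detρ n g) with hg | hg <;> simp [hg]

/-- **Lemma 3.3.** For `n ≥ 3` and `f ∈ Aut(F_n)`, if some left multiplication `L_{x_i x_j}`
(with `i ≠ j`) lies in the normal closure `N(f)`, then `N(f) = SAut(F_n)` if `det f̄ = 1`
and `N(f) = Aut(F_n)` if `det f̄ = -1`. -/
theorem normalClosure_of_left_multiplication_aut (n : ℕ) (hn : 3 ≤ n) (f : FrAut n)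
    (h : ∃ i j : Fin n, i ≠ j ∧ ∃ L : FrAut n,
      L (FreeGroup.of i) = FreeGroup.of j * FreeGroup.of i ∧
      (∀ k, k ≠ i → L (FreeGroup.of k) = FreeGroup.of k) ∧
      L ∈ Subgroup.normalClosure {f}) :
    (detρ n f = 1 → Subgroup.normalClosure {f} = SAut n) ∧
    (detρ n f = -1 → Subgroup.normalClosure {f} = ⊤) := by
  exact normalClosure_of_left_multiplication_aut_general n f h

end NormalClosurePaper
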